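/- arXiv:1107.4005 — 5 statements merged into one kernel-verified Lean document; each statement's English description precedes it below -/
import Mathlib

section
/- For every n ≥ 2 and every G ∈ X_n, the integral operator L₀^(n) maps X_n into X_n and satisfies ‖L₀^(n)G‖_{X_n} ≤ (n(n−1)/2)·(c₁+c₂)·‖G‖_{X_n}. -/
open MeasureTheory

noncomputable section

/-- `ℝ^d` -/
abbrev Rd (d : ℕ) : Type := Fin d → ℝ

/-- The diagonal part `L₀⁽ⁿ⁾` of the binary-jump generator, acting on functions on `(ℝ^d)ⁿ`:
`(L₀⁽ⁿ⁾G)(x) = Σ_{i<j} ∫∫ c(xᵢ,xⱼ,y₁,y₂)·[G(x with y₁ at i, y₂ at j) − G(x)] dy₁ dy₂`. -/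
def L0n (d n : ℕ) (c : Rd d → Rd d → Rd d → Rd d → ℝ)
    (G : (Fin n → Rd d) → ℝ) (x : Fin n → Rd d) : ℝ :=
  ∑ i : Fin n, ∑ j : Fin n, if i < j then
    ∫ y : Rd d × Rd d, c (x i) (x j) y.1 y.2 *
      (G (Function.update (Function.update x i y.1) j y.2) - G x)
  else 0

/-!
Exchanging the coordinates `xᵢ, xⱼ` of a configuration with the target points `y₁, y₂` of the jump
preserves the product measure and interchanges the roles of the two arguments of the kernel. After
this change of variables the gain term `c(xᵢ, xⱼ, y₁, y₂) G(…, y₁, …, y₂, …)` becomes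
`c(y₁, y₂, xᵢ, xⱼ) G(x)`, which integrates to at most `c₂ ‖G‖`; the loss term
`c(xᵢ, xⱼ, y₁, y₂) G(x)` integrates to at most `c₁ ‖G‖`. It remains to sum over the `n(n-1)/2`
pairs `i < j`.
-/

open scoped ENNReal

theorem card_filter_fst_lt_snd (ι : Type*) [Fintype ι] [LinearOrder ι] :
    (Finset.univ.filter fun p : ι × ι => p.1 < p.2).card = (Fintype.card ι).choose 2 := by
  have h := Finset.sum_sym2_filter_not_isDiag (Finset.univ : Finset ι) fun _ => 1
  have h_offDiag : (Finset.univ : Finset ι).offDiag.filter (fun p => p.1 < p.2) =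
      Finset.univ.filter fun p => p.1 < p.2 := by
    ext p
    simpa using ne_of_lt
  rw [h_offDiag, ← Finset.card_eq_sum_ones, ← Finset.card_eq_sum_ones] at h
  rw [← h, ← Sym2.card_subtype_not_diag, Fintype.card_subtype, Finset.sym2_univ]

theorem lintegral_enorm_le_ofReal {α F : Type*} [MeasurableSpace α] [NormedAddCommGroup F]
    {μ : Measure α} {f : α → F} {C : ℝ} (hf : Integrable f μ) (hC : ∫ a, ‖f a‖ ∂μ ≤ C) :
    ∫⁻ a, ‖f a‖ₑ ∂μ ≤ ENNReal.ofReal C :=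
  (ofReal_integral_norm_eq_lintegral_enorm hf).symm.trans_le (ENNReal.ofReal_le_ofReal hC)

theorem neZero_prod {α β : Type*} [MeasurableSpace α] [MeasurableSpace β] (μ : Measure α)
    (ν : Measure β) [NeZero μ] [NeZero ν] [SFinite ν] : NeZero (μ.prod ν) :=
  ⟨Measure.measure_univ_ne_zero.1 <| by simp [← Set.univ_prod_univ, NeZero.ne]⟩

theorem nonneg_of_ae_integral_norm_le {α β F : Type*} [MeasurableSpace α] [MeasurableSpace β]
    [NormedAddCommGroup F] {μ : Measure α} [NeZero μ] {ν : Measure β} {f : α → β → F} {C : ℝ}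
    (hC : ∀ᵐ x ∂μ, ∫ y, ‖f x y‖ ∂ν ≤ C) : 0 ≤ C :=
  let ⟨_, hx⟩ := hC.exists
  (integral_nonneg fun _ => norm_nonneg _).trans hx

section ProductMeasure

variable {ι E : Type*} [Fintype ι] [MeasurableSpace E] {μ : Measure E} [SigmaFinite μ]

theorem quasiMeasurePreserving_eval_prodMk {α : ι → Type*} [∀ i, MeasurableSpace (α i)]
    (μ : ∀ i, Measure (α i)) [∀ i, SigmaFinite (μ i)] {i j : ι} (hij : i ≠ j) :
    Measure.QuasiMeasurePreserving (fun x : ∀ k, α k => (x i, x j)) (Measure.pi μ)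
      ((μ i).prod (μ j)) := by
  classical
  have h_split := (measurePreserving_piEquivPiSubtypeProd μ (· ≠ j)).quasiMeasurePreserving
  exact (QuasiMeasurePreserving.prodMap (Measure.quasiMeasurePreserving_eval _ ⟨i, hij⟩)
    (Measure.quasiMeasurePreserving_eval _ ⟨j, not_not.2 rfl⟩)).comp h_split

theorem quasiMeasurePreserving_prodMap_eval_prodMk_id {i j : ι} (hij : i ≠ j) :
    Measure.QuasiMeasurePreserving
      (fun p : (ι → E) × (E × E) => ((p.1 i, p.1 j), p.2))
      ((Measure.pi fun _ => μ).prod (μ.prod μ)) ((μ.prod μ).prod (μ.prod μ)) :=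
  QuasiMeasurePreserving.prodMap (quasiMeasurePreserving_eval_prodMk (fun _ => μ) hij) (.id _)

theorem measurePreserving_sumElim_comp_perm {κ : Type*} [Fintype κ] (σ : Equiv.Perm (ι ⊕ κ)) :
    MeasurePreserving
      (fun p : (ι → E) × (κ → E) =>
        (Sum.elim p.1 p.2 ∘ σ ∘ Sum.inl, Sum.elim p.1 p.2 ∘ σ ∘ Sum.inr))
      ((Measure.pi fun _ => μ).prod (Measure.pi fun _ => μ))
      ((Measure.pi fun _ => μ).prod (Measure.pi fun _ => μ)) := by
  have h_sum := measurePreserving_sumPiEquivProdPi fun _ : ι ⊕ κ => μ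
  have h_perm := measurePreserving_arrowCongr' (fun _ => μ) (fun _ => μ) σ.symm (.refl E)
    fun _ => .id μ
  exact h_sum.comp (h_perm.comp h_sum.symm)

variable [DecidableEq ι]

/-- The exchange of the coordinates `x i`, `x j` of a configuration `x` with the points `y.1`,
`y.2`. The coordinate `j` is overwritten last, so this is an exchange only for `i ≠ j`. -/
def exchangePair (i j : ι) (p : (ι → E) × (E × E)) : (ι → E) × (E × E) :=
  (Function.update (Function.update p.1 i p.2.1) j p.2.2, (p.1 i, p.1 j))

theorem measurePreserving_exchangePair {i j : ι} (hij : i ≠ j) :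
    MeasurePreserving (exchangePair i j) ((Measure.pi fun _ => μ).prod (μ.prod μ))
      ((Measure.pi fun _ => μ).prod (μ.prod μ)) := by
  have h_pair := (MeasurePreserving.id (Measure.pi fun _ : ι => μ)).prod
    (measurePreserving_finTwoArrow μ)
  have h_pair_symm := (MeasurePreserving.id (Measure.pi fun _ : ι => μ)).prod
    ((measurePreserving_finTwoArrow μ).symm _)
  have h_perm := measurePreserving_sumElim_comp_perm (μ := μ)
    (Equiv.swap (Sum.inl i) (Sum.inr 0) * Equiv.swap (Sum.inl j) (Sum.inr (1 : Fin 2)))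
  convert h_pair.comp (h_perm.comp h_pair_symm) using 1
  funext p
  ext k
  · rcases eq_or_ne k j with rfl | hkj
    · simp [exchangePair, Equiv.swap_apply_def, MeasurableEquiv.finTwoArrow]
    · rcases eq_or_ne k i with rfl | hki
      · simp [exchangePair, Equiv.swap_apply_def, MeasurableEquiv.finTwoArrow, hij]
      · simp [exchangePair, Equiv.swap_apply_def, MeasurableEquiv.finTwoArrow, hkj, hki]
  · simp [exchangePair, Equiv.swap_apply_def, MeasurableEquiv.finTwoArrow]
  · simp [exchangePair, Equiv.swap_apply_def, MeasurableEquiv.finTwoArrow, hij.symm]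

end ProductMeasure

section KernelBounds

variable {ι E : Type*} [Fintype ι] [MeasurableSpace E] {μ : Measure E} [SigmaFinite μ]
  {k : E × E → E × E → ℝ≥0∞} {C : ℝ≥0∞} {g : (ι → E) → ℝ≥0∞} {i j : ι}

theorem lintegral_kernel_mul_le (hij : i ≠ j)
    (hk : AEMeasurable (Function.uncurry k) ((μ.prod μ).prod (μ.prod μ)))
    (hC : ∀ᵐ x ∂μ.prod μ, ∫⁻ y, k x y ∂μ.prod μ ≤ C)
    (hg : AEMeasurable g (Measure.pi fun _ => μ)) :
    ∫⁻ p, k (p.1 i, p.1 j) p.2 * g p.1 ∂(Measure.pi fun _ => μ).prod (μ.prod μ) ≤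
      C * ∫⁻ x, g x ∂Measure.pi fun _ => μ := by
  have h_meas := hk.comp_quasiMeasurePreserving
    (quasiMeasurePreserving_prodMap_eval_prodMk_id hij)
  have h_section : ∀ᵐ x ∂Measure.pi fun _ : ι => μ, AEMeasurable (k (x i, x j)) (μ.prod μ) :=
    h_meas.aestronglyMeasurable.prodMk_left.mono fun _ h => h.aemeasurable
  calc
    _ = ∫⁻ x, ∫⁻ y, k (x i, x j) y * g x ∂μ.prod μ ∂Measure.pi fun _ => μ :=
      lintegral_prod _ (h_meas.mul hg.comp_fst)
    _ ≤ ∫⁻ x, C * g x ∂Measure.pi fun _ => μ := by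
      refine lintegral_mono_ae ?_
      filter_upwards [h_section, (quasiMeasurePreserving_eval_prodMk (fun _ => μ) hij).ae hC]
        with x hx_meas hx_le
      rw [lintegral_mul_const'' _ hx_meas]
      gcongr
    _ = C * ∫⁻ x, g x ∂Measure.pi fun _ => μ := lintegral_const_mul'' _ hg

theorem lintegral_kernel_mul_exchangePair_le [DecidableEq ι] (hij : i ≠ j)
    (hk : AEMeasurable (Function.uncurry k) ((μ.prod μ).prod (μ.prod μ)))
    (hC : ∀ᵐ y ∂μ.prod μ, ∫⁻ x, k x y ∂μ.prod μ ≤ C)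
    (hg : AEMeasurable g (Measure.pi fun _ => μ)) :
    ∫⁻ p, k (p.1 i, p.1 j) p.2 * g (exchangePair i j p).1
        ∂(Measure.pi fun _ => μ).prod (μ.prod μ) ≤
      C * ∫⁻ x, g x ∂Measure.pi fun _ => μ := by
  have hk_flip : AEMeasurable (Function.uncurry (flip k)) ((μ.prod μ).prod (μ.prod μ)) :=
    hk.comp_quasiMeasurePreserving Measure.measurePreserving_swap.quasiMeasurePreserving
  have h_exchange := measurePreserving_exchangePair (μ := μ) hij
  calc
    _ = ∫⁻ p, flip k ((exchangePair i j p).1 i, (exchangePair i j p).1 j) (exchangePair i j p).2 *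
          g (exchangePair i j p).1 ∂(Measure.pi fun _ => μ).prod (μ.prod μ) := by
      simp [exchangePair, flip, hij]
    _ = ∫⁻ p, flip k (p.1 i, p.1 j) p.2 * g p.1 ∂(Measure.pi fun _ => μ).prod (μ.prod μ) := by
      rw [← lintegral_map' (f := fun p => flip k (p.1 i, p.1 j) p.2 * g p.1) ?_
        h_exchange.aemeasurable, h_exchange.map_eq]
      rw [h_exchange.map_eq]
      exact (hk_flip.comp_quasiMeasurePreserving
        (quasiMeasurePreserving_prodMap_eval_prodMk_id hij)).mul hg.comp_fst
    _ ≤ C * ∫⁻ x, g x ∂Measure.pi fun _ => μ := lintegral_kernel_mul_le hij hk_flip hC hg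

end KernelBounds

section PairJump

variable {ι E F : Type*} [DecidableEq ι] [MeasurableSpace E] [NormedAddCommGroup F]
  [NormedSpace ℝ F]

/-- The generator of the jumps of the ordered pair of particles `i`, `j`: from `(x i, x j)` they
move to `y` at rate `c (x i, x j) y` with respect to `μ.prod μ`. -/
def pairJump (μ : Measure E) (c : E × E → E × E → ℝ) (i j : ι) (G : (ι → E) → F) (x : ι → E) : F :=
  ∫ y, c (x i, x j) y • (G (Function.update (Function.update x i y.1) j y.2) - G x) ∂μ.prod μ

variable [Fintype ι] {μ : Measure E} [SigmaFinite μ] {c : E × E → E × E → ℝ} {G : (ι → E) → F}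
  {i j : ι}

theorem aestronglyMeasurable_pairJump (hij : i ≠ j)
    (hc : AEStronglyMeasurable (Function.uncurry c) ((μ.prod μ).prod (μ.prod μ)))
    (hG : AEStronglyMeasurable G (Measure.pi fun _ => μ)) :
    AEStronglyMeasurable (pairJump μ c i j G) (Measure.pi fun _ => μ) := by
  have h_rate := hc.comp_quasiMeasurePreserving
    (quasiMeasurePreserving_prodMap_eval_prodMk_id hij)
  have h_target : AEStronglyMeasurable (fun p => G (exchangePair i j p).1)
      ((Measure.pi fun _ => μ).prod (μ.prod μ)) :=
    hG.comp_fst.comp_measurePreserving (measurePreserving_exchangePair hij)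
  exact (h_rate.smul (h_target.sub hG.comp_fst)).integral_prod_right'

theorem lintegral_enorm_pairJump_le {C₁ C₂ : ℝ≥0∞} (hij : i ≠ j)
    (hc : AEStronglyMeasurable (Function.uncurry c) ((μ.prod μ).prod (μ.prod μ)))
    (hC₁ : ∀ᵐ x ∂μ.prod μ, ∫⁻ y, ‖c x y‖ₑ ∂μ.prod μ ≤ C₁)
    (hC₂ : ∀ᵐ y ∂μ.prod μ, ∫⁻ x, ‖c x y‖ₑ ∂μ.prod μ ≤ C₂)
    (hG : AEStronglyMeasurable G (Measure.pi fun _ => μ)) :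
    ∫⁻ x, ‖pairJump μ c i j G x‖ₑ ∂Measure.pi (fun _ => μ) ≤
      (C₁ + C₂) * ∫⁻ x, ‖G x‖ₑ ∂Measure.pi fun _ => μ := by
  have h_rate := hc.enorm.comp_quasiMeasurePreserving
    (quasiMeasurePreserving_prodMap_eval_prodMk_id hij)
  have h_loss := h_rate.mul hG.enorm.comp_fst
  have h_gain := h_rate.mul
    (hG.enorm.comp_fst.comp_quasiMeasurePreserving
      (measurePreserving_exchangePair hij).quasiMeasurePreserving)
  calc
    _ ≤ ∫⁻ x, ∫⁻ y, (‖c (x i, x j) y‖ₑ * ‖G x‖ₑ +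
          ‖c (x i, x j) y‖ₑ * ‖G (exchangePair i j (x, y)).1‖ₑ) ∂μ.prod μ
          ∂Measure.pi fun _ => μ := by
      refine lintegral_mono fun x => (enorm_integral_le_lintegral_enorm _).trans ?_
      refine lintegral_mono fun y => ?_
      rw [enorm_smul, ← mul_add, add_comm]
      gcongr
      exact enorm_sub_le
    _ = ∫⁻ p, ‖c (p.1 i, p.1 j) p.2‖ₑ * ‖G p.1‖ₑ ∂(Measure.pi fun _ => μ).prod (μ.prod μ) +
          ∫⁻ p, ‖c (p.1 i, p.1 j) p.2‖ₑ * ‖G (exchangePair i j p).1‖ₑ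
            ∂(Measure.pi fun _ => μ).prod (μ.prod μ) :=
      (lintegral_prod _ (h_loss.add h_gain)).symm.trans (lintegral_add_left' h_loss _)
    _ ≤ C₁ * ∫⁻ x, ‖G x‖ₑ ∂Measure.pi (fun _ => μ) +
          C₂ * ∫⁻ x, ‖G x‖ₑ ∂Measure.pi fun _ => μ :=
      add_le_add (lintegral_kernel_mul_le (k := fun x y => ‖c x y‖ₑ) hij hc.enorm hC₁ hG.enorm)
        (lintegral_kernel_mul_exchangePair_le (k := fun x y => ‖c x y‖ₑ) hij hc.enorm hC₂ hG.enorm)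
    _ = (C₁ + C₂) * ∫⁻ x, ‖G x‖ₑ ∂Measure.pi fun _ => μ := (add_mul ..).symm

end PairJump

section PairJumpSum

variable {ι E F : Type*} [Fintype ι] [LinearOrder ι] [MeasurableSpace E] [NormedAddCommGroup F]
  [NormedSpace ℝ F]

/-- The diagonal part `∑_{i < j} pairJump μ c i j` of the binary-jump generator, over an arbitrary
one-particle space `E` with reference measure `μ`. -/
def pairJumpSum (μ : Measure E) (c : E × E → E × E → ℝ) (G : (ι → E) → F) (x : ι → E) : F :=
  ∑ p : ι × ι with p.1 < p.2, pairJump μ c p.1 p.2 G x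

variable {μ : Measure E} [SigmaFinite μ] {c : E × E → E × E → ℝ} {G : (ι → E) → F}

theorem aestronglyMeasurable_pairJumpSum
    (hc : AEStronglyMeasurable (Function.uncurry c) ((μ.prod μ).prod (μ.prod μ)))
    (hG : AEStronglyMeasurable G (Measure.pi fun _ => μ)) :
    AEStronglyMeasurable (pairJumpSum μ c G) (Measure.pi fun _ => μ) :=
  Finset.aestronglyMeasurable_fun_sum _ fun _ hp =>
    aestronglyMeasurable_pairJump (Finset.mem_filter.1 hp).2.ne hc hG

theorem lintegral_enorm_pairJumpSum_le {C₁ C₂ : ℝ≥0∞}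
    (hc : AEStronglyMeasurable (Function.uncurry c) ((μ.prod μ).prod (μ.prod μ)))
    (hC₁ : ∀ᵐ x ∂μ.prod μ, ∫⁻ y, ‖c x y‖ₑ ∂μ.prod μ ≤ C₁)
    (hC₂ : ∀ᵐ y ∂μ.prod μ, ∫⁻ x, ‖c x y‖ₑ ∂μ.prod μ ≤ C₂)
    (hG : AEStronglyMeasurable G (Measure.pi fun _ => μ)) :
    ∫⁻ x, ‖pairJumpSum μ c G x‖ₑ ∂Measure.pi (fun _ => μ) ≤
      (Fintype.card ι).choose 2 * ((C₁ + C₂) * ∫⁻ x, ‖G x‖ₑ ∂Measure.pi fun _ => μ) := by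
  calc
    _ ≤ ∫⁻ x, ∑ p : ι × ι with p.1 < p.2, ‖pairJump μ c p.1 p.2 G x‖ₑ ∂Measure.pi fun _ => μ :=
      lintegral_mono fun x => enorm_sum_le _ _
    _ = ∑ p : ι × ι with p.1 < p.2,
          ∫⁻ x, ‖pairJump μ c p.1 p.2 G x‖ₑ ∂Measure.pi fun _ => μ :=
      lintegral_finsetSum' _ fun _ hp =>
        (aestronglyMeasurable_pairJump (Finset.mem_filter.1 hp).2.ne hc hG).enorm
    _ ≤ ∑ p : ι × ι with p.1 < p.2, (C₁ + C₂) * ∫⁻ x, ‖G x‖ₑ ∂Measure.pi fun _ => μ :=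
      Finset.sum_le_sum fun _ hp =>
        lintegral_enorm_pairJump_le (Finset.mem_filter.1 hp).2.ne hc hC₁ hC₂ hG
    _ = (Fintype.card ι).choose 2 * ((C₁ + C₂) * ∫⁻ x, ‖G x‖ₑ ∂Measure.pi fun _ => μ) := by
      rw [Finset.sum_const, card_filter_fst_lt_snd, nsmul_eq_mul]

end PairJumpSum

theorem L0n_eq_pairJumpSum (d n : ℕ) (c : Rd d → Rd d → Rd d → Rd d → ℝ)
    (G : (Fin n → Rd d) → ℝ) :
    L0n d n c G = pairJumpSum volume (fun x y => c x.1 x.2 y.1 y.2) G := by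
  funext x
  simp only [L0n, pairJumpSum, pairJump, Finset.sum_filter, Fintype.sum_prod_type, smul_eq_mul]
  rfl

theorem statement0_general {ι E F : Type*} [Fintype ι] [LinearOrder ι] [MeasurableSpace E]
    [NormedAddCommGroup F] [NormedSpace ℝ F] {μ : Measure E} [SigmaFinite μ] [NeZero μ]
    {c : E × E → E × E → ℝ} {c₁ c₂ : ℝ}
    (hc : AEStronglyMeasurable (Function.uncurry c) ((μ.prod μ).prod (μ.prod μ)))
    (hc₁int : ∀ᵐ x ∂μ.prod μ, Integrable (c x) (μ.prod μ))
    (hc₁ : ∀ᵐ x ∂μ.prod μ, ∫ y, ‖c x y‖ ∂μ.prod μ ≤ c₁)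
    (hc₂int : ∀ᵐ y ∂μ.prod μ, Integrable (fun x => c x y) (μ.prod μ))
    (hc₂ : ∀ᵐ y ∂μ.prod μ, ∫ x, ‖c x y‖ ∂μ.prod μ ≤ c₂)
    {G : (ι → E) → F} (hG : Integrable G (Measure.pi fun _ => μ)) :
    Integrable (pairJumpSum μ c G) (Measure.pi fun _ => μ) ∧
      ∫ x, ‖pairJumpSum μ c G x‖ ∂Measure.pi (fun _ => μ) ≤
        (Fintype.card ι).choose 2 * (c₁ + c₂) * ∫ x, ‖G x‖ ∂Measure.pi fun _ => μ := by
  have := neZero_prod μ μ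
  have hc₁_nonneg : 0 ≤ c₁ := nonneg_of_ae_integral_norm_le hc₁
  have hc₂_nonneg : 0 ≤ c₂ := nonneg_of_ae_integral_norm_le hc₂
  have h_le : ∫⁻ x, ‖pairJumpSum μ c G x‖ₑ ∂Measure.pi (fun _ => μ) ≤
      ENNReal.ofReal
        ((Fintype.card ι).choose 2 * (c₁ + c₂) * ∫ x, ‖G x‖ ∂Measure.pi fun _ => μ) := by
    have hC₁ : ∀ᵐ x ∂μ.prod μ, ∫⁻ y, ‖c x y‖ₑ ∂μ.prod μ ≤ ENNReal.ofReal c₁ := by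
      filter_upwards [hc₁int, hc₁] with x using lintegral_enorm_le_ofReal
    have hC₂ : ∀ᵐ y ∂μ.prod μ, ∫⁻ x, ‖c x y‖ₑ ∂μ.prod μ ≤ ENNReal.ofReal c₂ := by
      filter_upwards [hc₂int, hc₂] with y using lintegral_enorm_le_ofReal
    refine (lintegral_enorm_pairJumpSum_le hc hC₁ hC₂ hG.1).trans_eq ?_
    rw [← ofReal_integral_norm_eq_lintegral_enorm hG, ← ENNReal.ofReal_add hc₁_nonneg hc₂_nonneg,
      ← ENNReal.ofReal_natCast, ← ENNReal.ofReal_mul (by positivity),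
      ← ENNReal.ofReal_mul (by positivity), mul_assoc]
  have h_int : Integrable (pairJumpSum μ c G) (Measure.pi fun _ => μ) :=
    ⟨aestronglyMeasurable_pairJumpSum hc hG.1, h_le.trans_lt ENNReal.ofReal_lt_top⟩
  refine ⟨h_int, (ENNReal.ofReal_le_ofReal_iff (by positivity)).1 ?_⟩
  rwa [ofReal_integral_norm_eq_lintegral_enorm h_int]

/-- Under the essential-sup bounds `c₁, c₂ < ∞`, for every `n ≥ 2` the operator
`L₀⁽ⁿ⁾` maps `X_n = L¹((ℝ^d)ⁿ)` into itself with
`‖L₀⁽ⁿ⁾G‖_{X_n} ≤ (n(n−1)/2)·(c₁+c₂)·‖G‖_{X_n}`. -/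
theorem statement0
    (d : ℕ) (hd : 1 ≤ d)
    (c : Rd d → Rd d → Rd d → Rd d → ℝ)
    (hc_meas : Measurable fun p : (Rd d × Rd d) × Rd d × Rd d => c p.1.1 p.1.2 p.2.1 p.2.2)
    (hc_nonneg : ∀ x₁ x₂ y₁ y₂, 0 ≤ c x₁ x₂ y₁ y₂)
    (c₁ c₂ : ℝ)
    -- `c₁` is an (finite) essential bound for `(x₁,x₂) ↦ ∫∫ c(x₁,x₂,y₁,y₂) dy₁dy₂`
    (hc₁int : ∀ᵐ x : Rd d × Rd d, Integrable fun y : Rd d × Rd d => c x.1 x.2 y.1 y.2)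
    (hc₁ : ∀ᵐ x : Rd d × Rd d, (∫ y : Rd d × Rd d, c x.1 x.2 y.1 y.2) ≤ c₁)
    -- `c₂` is an (finite) essential bound for `(x₁,x₂) ↦ ∫∫ c(y₁,y₂,x₁,x₂) dy₁dy₂`
    (hc₂int : ∀ᵐ x : Rd d × Rd d, Integrable fun y : Rd d × Rd d => c y.1 y.2 x.1 x.2)
    (hc₂ : ∀ᵐ x : Rd d × Rd d, (∫ y : Rd d × Rd d, c y.1 y.2 x.1 x.2) ≤ c₂)
    (n : ℕ) (hn : 2 ≤ n)
    (G : (Fin n → Rd d) → ℝ) (hG : Integrable G) :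
    Integrable (L0n d n c G) ∧
      ∫ x : Fin n → Rd d, |L0n d n c G x| ≤
        ((n : ℝ) * ((n : ℝ) - 1) / 2) * (c₁ + c₂) * ∫ x : Fin n → Rd d, |G x| := by
  have h := statement0_general hc_meas.aestronglyMeasurable hc₁int
    (by simpa only [Real.norm_of_nonneg (hc_nonneg _ _ _ _)] using! hc₁) hc₂int
    (by simpa only [Real.norm_of_nonneg (hc_nonneg _ _ _ _)] using! hc₂) hG
  rwa [← L0n_eq_pairJumpSum, Fintype.card_fin, Nat.cast_choose_two] at h
end
end

section
/- Let C > 0, Υ > 0, p₀ ∈ L^∞(ℝ^d) with 0 ≤ p₀ ≤ C a.e., and assume c₁, c₃, c₄ < ∞ and, for a.e. (x,y), ∫∫ c(y,u₁,x,u₂) du₁du₂ ≤ a₁(x,y). Then for all continuous v, w : [0,Υ] → L^∞(ℝ^d) with 0 ≤ v_t ≤ C and 0 ≤ w_t ≤ C a.e. for all t, the map Φ defined by (Φv)_t(x) := exp(−∫₀^t ∫ a₁(x,y) v_s(y) dy ds)·p₀(x) + ∫₀^t exp(−∫_s^t ∫ a₁(x,y) v_τ(y) dy dτ)·(∫∫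 c̃(y₁,y₂,x) v_s(y₁) v_s(y₂) dy₁dy₂) ds satisfies the Lipschitz estimate sup_{t∈[0,Υ]} ‖(Φv)_t − (Φw)_t‖_{L^∞} ≤ 2C(c₃+c₄)·Υ · sup_{t∈[0,Υ]} ‖v_t − w_t‖_{L^∞}. -/
open MeasureTheory

noncomputable section

/-- `a₁(x,y) := ∫∫ c(x,y,u₁,u₂) du₁du₂`. -/
def a1f (d : ℕ) (c : Rd d → Rd d → Rd d → Rd d → ℝ) (x y : Rd d) : ℝ :=
  ∫ u : Rd d × Rd d, c x y u.1 u.2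

/-- `c̃(y₁,y₂,x) := ∫ c(y₁,y₂,x,u) du`. -/
def ctil3 (d : ℕ) (c : Rd d → Rd d → Rd d → Rd d → ℝ) (y₁ y₂ x : Rd d) : ℝ :=
  ∫ u : Rd d, c y₁ y₂ x u

/-- The fixed-point map `Φ` of the Vlasov equation. -/
def PhiMap (d : ℕ) (c : Rd d → Rd d → Rd d → Rd d → ℝ)
    (p₀ : Lp ℝ ⊤ (volume : Measure (Rd d)))
    (V : ℝ → Lp ℝ ⊤ (volume : Measure (Rd d))) (t : ℝ) (x : Rd d) : ℝ :=
  Real.exp (-(∫ s in (0 : ℝ)..t, ∫ y : Rd d, a1f d c x y * V s y)) * p₀ x +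
    ∫ s in (0 : ℝ)..t,
      Real.exp (-(∫ τ in s..t, ∫ y : Rd d, a1f d c x y * V τ y)) *
        (∫ y : Rd d × Rd d, ctil3 d c y.1 y.2 x * V s y.1 * V s y.2)

/-!
Fix `x` and write `φ_t = (Φv)_t(x)`. Variation of constants says that `φ` solves `φ' = B - A φ`
with loss rate `A = ∫ a₁(x,y) v(y) dy` and gain `B = ∫∫ c̃(y₁,y₂,x) v(y₁) v(y₂) dy₁dy₂`. The
hypothesis on `c` gives `B ≤ C A`, so `C` is a supersolution and `0 ≤ φ ≤ C`. For two curves,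
`δ = φ₁ - φ₂` solves `δ' = -A₁ δ + (B₁ - B₂) - (A₁ - A₂) φ₂`; since `A₁ ≥ 0`, `|δ|` grows at most at
the rate `|B₁ - B₂| + C |A₁ - A₂|`, which is bounded by `2 C ‖c̃(·,·,x)‖₁ + C ‖a₁(x,·)‖₁` times
`‖v - w‖_∞`.
-/

open Set

section LinearODE

variable {A B A₁ A₂ B₁ B₂ f f' : ℝ → ℝ} {a b p t T C α β γ : ℝ}

theorem hasDerivWithinAt_integral_of_continuousOn_Icc (hA : ContinuousOn A (Icc a b))
    (ht : t ∈ Icc a b) :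
    HasDerivWithinAt (fun t ↦ ∫ s in a..t, A s) (A t) (Icc a b) t := by
  have : Fact (t ∈ Icc a b) := ⟨ht⟩
  have hA' : ContinuousOn A (uIcc a t) := by
    rw [uIcc_of_le ht.1]
    exact hA.mono (Icc_subset_Icc_right ht.2)
  exact intervalIntegral.integral_hasDerivWithinAt_right hA'.intervalIntegrable
    (hA.stronglyMeasurableAtFilter_nhdsWithin measurableSet_Icc t) (hA t ht)

theorem nonneg_of_deriv_add_mul_nonneg (hA : ContinuousOn A (Icc a b))
    (hf : ∀ t ∈ Icc a b, HasDerivWithinAt f (f' t) (Icc a b) t)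
    (hineq : ∀ t ∈ Icc a b, 0 ≤ f' t + A t * f t) (ha : 0 ≤ f a) (ht : t ∈ Icc a b) :
    0 ≤ f t := by
  let E : ℝ → ℝ := fun t ↦ Real.exp (∫ s in a..t, A s)
  have hderiv : ∀ t ∈ Icc a b,
      HasDerivWithinAt (fun t ↦ f t * E t) ((f' t + A t * f t) * E t) (Icc a b) t := by
    intro t ht
    refine ((hf t ht).mul (hasDerivWithinAt_integral_of_continuousOn_Icc hA ht).exp).congr_deriv ?_
    ring
  have hmono : MonotoneOn (fun t ↦ f t * E t) (Icc a b) :=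
    monotoneOn_of_hasDerivWithinAt_nonneg (convex_Icc a b)
      (fun t ht ↦ (hderiv t ht).continuousWithinAt)
      (fun t ht ↦ (hderiv t (interior_subset ht)).mono interior_subset)
      (fun t ht ↦ mul_nonneg (hineq t (interior_subset ht)) (Real.exp_pos _).le)
  refine nonneg_of_mul_nonneg_left ?_ (Real.exp_pos (∫ s in a..t, A s))
  calc 0 ≤ f a * E a := mul_nonneg ha (Real.exp_pos _).le
    _ ≤ f t * E t := hmono ⟨le_rfl, ht.1.trans ht.2⟩ ht ht.1

theorem abs_le_mul_of_abs_deriv_add_mul_le (hA : ContinuousOn A (Icc 0 T))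
    (hA0 : ∀ t ∈ Icc 0 T, 0 ≤ A t)
    (hf : ∀ t ∈ Icc 0 T, HasDerivWithinAt f (f' t) (Icc 0 T) t)
    (hbound : ∀ t ∈ Icc 0 T, |f' t + A t * f t| ≤ γ) (h0 : f 0 = 0) (ht : t ∈ Icc 0 T) :
    |f t| ≤ γ * t := by
  have hγ : 0 ≤ γ := (abs_nonneg _).trans (hbound t ht)
  have hside : ∀ ε : ℝ, |ε| = 1 → 0 ≤ γ * t + ε * f t := by
    intro ε hε
    have hderiv : ∀ s ∈ Icc 0 T,
        HasDerivWithinAt (fun s ↦ γ * s + ε * f s) (γ * 1 + ε * f' s) (Icc 0 T) s :=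
      fun s hs ↦ ((hasDerivWithinAt_id s _).const_mul γ).add ((hf s hs).const_mul ε)
    refine nonneg_of_deriv_add_mul_nonneg (f := fun s ↦ γ * s + ε * f s) hA hderiv
      (fun s hs ↦ ?_) (by simp [h0]) ht
    have hdrift : -γ ≤ ε * (f' s + A s * f s) :=
      (abs_le.1 (by rw [abs_mul, hε, one_mul]; exact hbound s hs)).1
    have hlinear : 0 ≤ A s * (γ * s) := mul_nonneg (hA0 s hs) (mul_nonneg hγ hs.1)
    linarith
  have hpos := hside 1 abs_one
  have hneg := hside (-1) (by rw [abs_neg, abs_one])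
  exact abs_le.2 ⟨by linarith, by linarith⟩

/-- Variation of constants: the solution of the linear equation `φ' = B - A φ`, `φ 0 = p`. -/
def duhamel (A B : ℝ → ℝ) (p t : ℝ) : ℝ :=
  Real.exp (-(∫ s in (0 : ℝ)..t, A s)) * p +
    ∫ s in (0 : ℝ)..t, Real.exp (-(∫ τ in s..t, A τ)) * B s

theorem duhamel_zero : duhamel A B p 0 = p := by
  simp [duhamel]

theorem duhamel_nonneg (hp : 0 ≤ p) (ht : 0 ≤ t) (hB : ∀ s ∈ Icc 0 t, 0 ≤ B s) :
    0 ≤ duhamel A B p t :=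
  add_nonneg (mul_nonneg (Real.exp_pos _).le hp) <|
    intervalIntegral.integral_nonneg ht fun s hs ↦ mul_nonneg (Real.exp_pos _).le (hB s hs)

theorem duhamel_eq_exp_mul (hA : ContinuousOn A (Icc 0 T)) (ht : t ∈ Icc 0 T) :
    duhamel A B p t = Real.exp (-(∫ s in (0 : ℝ)..t, A s)) *
      (p + ∫ s in (0 : ℝ)..t, Real.exp (∫ τ in (0 : ℝ)..s, A τ) * B s) := by
  have hint : ∀ r s, r ∈ Icc 0 T → s ∈ Icc 0 T → IntervalIntegrable A volume r s :=
    fun r s hr hs ↦ (hA.mono (uIcc_subset_Icc hr hs)).intervalIntegrable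
  have h0 : (0 : ℝ) ∈ Icc 0 T := ⟨le_rfl, ht.1.trans ht.2⟩
  rw [duhamel, mul_add, ← intervalIntegral.integral_const_mul]
  congr 1
  refine intervalIntegral.integral_congr fun s hs ↦ ?_
  have hs' : s ∈ Icc 0 T := uIcc_subset_Icc h0 ht hs
  simp only [← mul_assoc, ← Real.exp_add,
    ← intervalIntegral.integral_add_adjacent_intervals (hint 0 s h0 hs') (hint s t hs' ht)]
  congr 2
  ring

theorem hasDerivWithinAt_duhamel (hA : ContinuousOn A (Icc 0 T)) (hB : ContinuousOn B (Icc 0 T))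
    (ht : t ∈ Icc 0 T) :
    HasDerivWithinAt (duhamel A B p) (B t - A t * duhamel A B p t) (Icc 0 T) t := by
  have hprim := fun t ht ↦ hasDerivWithinAt_integral_of_continuousOn_Icc (t := t) hA ht
  have hsource : ContinuousOn (fun s ↦ Real.exp (∫ τ in (0 : ℝ)..s, A τ) * B s) (Icc 0 T) :=
    (Real.continuous_exp.comp_continuousOn fun s hs ↦ (hprim s hs).continuousWithinAt).mul hB
  refine (((hprim t ht).neg.exp.mul
    ((hasDerivWithinAt_integral_of_continuousOn_Icc hsource ht).const_add p)).congr_of_mem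
    (fun s hs ↦ duhamel_eq_exp_mul hA hs) ht).congr_deriv ?_
  have hexp : Real.exp (-(∫ s in (0 : ℝ)..t, A s)) * Real.exp (∫ s in (0 : ℝ)..t, A s) = 1 := by
    rw [← Real.exp_add, neg_add_cancel, Real.exp_zero]
  rw [duhamel_eq_exp_mul hA ht]
  simp only [Pi.neg_apply]
  linear_combination B t * hexp

theorem duhamel_le (hA : ContinuousOn A (Icc 0 T)) (hB : ContinuousOn B (Icc 0 T)) (hp : p ≤ C)
    (hBA : ∀ s ∈ Icc 0 T, B s ≤ C * A s) (ht : t ∈ Icc 0 T) : duhamel A B p t ≤ C := by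
  refine sub_nonneg.1 (nonneg_of_deriv_add_mul_nonneg (f := fun s ↦ C - duhamel A B p s) hA
    (fun s hs ↦ (hasDerivWithinAt_duhamel hA hB hs).const_sub C) (fun s hs ↦ ?_) ?_ ht)
  · linarith [hBA s hs]
  · simpa only [duhamel_zero, sub_nonneg]

theorem abs_duhamel_sub_le (hA₁ : ContinuousOn A₁ (Icc 0 T)) (hA₂ : ContinuousOn A₂ (Icc 0 T))
    (hB₁ : ContinuousOn B₁ (Icc 0 T)) (hB₂ : ContinuousOn B₂ (Icc 0 T)) (hp : p ∈ Icc 0 C)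
    (hA₁0 : ∀ s ∈ Icc 0 T, 0 ≤ A₁ s) (hB₂0 : ∀ s ∈ Icc 0 T, 0 ≤ B₂ s)
    (hBA : ∀ s ∈ Icc 0 T, B₂ s ≤ C * A₂ s) (hα : ∀ s ∈ Icc 0 T, |A₁ s - A₂ s| ≤ α)
    (hβ : ∀ s ∈ Icc 0 T, |B₁ s - B₂ s| ≤ β) (ht : t ∈ Icc 0 T) :
    |duhamel A₁ B₁ p t - duhamel A₂ B₂ p t| ≤ (C * α + β) * t := by
  have hC : 0 ≤ C := hp.1.trans hp.2
  have hφ₂ : ∀ s ∈ Icc 0 T, |duhamel A₂ B₂ p s| ≤ C := fun s hs ↦ by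
    rw [abs_of_nonneg (duhamel_nonneg hp.1 hs.1 fun r hr ↦ hB₂0 r ⟨hr.1, hr.2.trans hs.2⟩)]
    exact duhamel_le hA₂ hB₂ hp.2 hBA hs
  refine abs_le_mul_of_abs_deriv_add_mul_le
    (f := fun s ↦ duhamel A₁ B₁ p s - duhamel A₂ B₂ p s) hA₁ hA₁0
    (fun s hs ↦ (hasDerivWithinAt_duhamel hA₁ hB₁ hs).sub (hasDerivWithinAt_duhamel hA₂ hB₂ hs))
    (fun s hs ↦ ?_) (by simp only [duhamel_zero, sub_self]) ht
  calc |B₁ s - A₁ s * duhamel A₁ B₁ p s - (B₂ s - A₂ s * duhamel A₂ B₂ p s)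
          + A₁ s * (duhamel A₁ B₁ p s - duhamel A₂ B₂ p s)|
      = |-(duhamel A₂ B₂ p s * (A₁ s - A₂ s)) + (B₁ s - B₂ s)| := by ring_nf
    _ ≤ |duhamel A₂ B₂ p s| * |A₁ s - A₂ s| + |B₁ s - B₂ s| := by
        simpa only [abs_neg, abs_mul] using
          abs_add_le (-(duhamel A₂ B₂ p s * (A₁ s - A₂ s))) (B₁ s - B₂ s)
    _ ≤ C * α + β := add_le_add (mul_le_mul (hφ₂ s hs) (hα s hs) (abs_nonneg _) hC) (hβ s hs)

end LinearODE

section IntegralForms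

variable {X : Type*} [MeasurableSpace X] {μ : Measure X} {k f g a : X → ℝ} {C D M : ℝ}

theorem ae_abs_le_norm (f : Lp ℝ ⊤ μ) : ∀ᵐ x ∂μ, |f x| ≤ ‖f‖ := by
  filter_upwards [ae_le_lpNorm_exponent_top (Lp.memLp f)] with x hx
  rwa [← toReal_eLpNorm (Lp.aestronglyMeasurable _), ← Lp.norm_def] at hx

theorem ae_abs_sub_le_norm_sub (f g : Lp ℝ ⊤ μ) : ∀ᵐ x ∂μ, |f x - g x| ≤ ‖f - g‖ := by
  filter_upwards [ae_abs_le_norm (f - g), Lp.coeFn_sub f g] with x hx hsub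
  rwa [hsub] at hx

theorem abs_integral_mul_sub_integral_mul_le (hk : Integrable k μ)
    (hkf : Integrable (fun x ↦ k x * f x) μ) (hkg : Integrable (fun x ↦ k x * g x) μ)
    (hM : ∀ᵐ x ∂μ, |f x - g x| ≤ M) :
    |(∫ x, k x * f x ∂μ) - ∫ x, k x * g x ∂μ| ≤ (∫ x, |k x| ∂μ) * M := by
  rw [← integral_sub hkf hkg, ← integral_mul_const, ← Real.norm_eq_abs]
  refine norm_integral_le_of_norm_le (hk.abs.mul_const M) ?_
  filter_upwards [hM] with x hx
  rw [← mul_sub, Real.norm_eq_abs, abs_mul]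
  exact mul_le_mul_of_nonneg_left hx (abs_nonneg _)

theorem continuous_integral_mul_Lp_top (hk : Integrable k μ) :
    Continuous fun f : Lp ℝ ⊤ μ ↦ ∫ x, k x * f x ∂μ :=
  (LipschitzWith.of_dist_le' fun f g ↦ by
    rw [Real.dist_eq, dist_eq_norm]
    exact abs_integral_mul_sub_integral_mul_le hk (hk.mul_of_top_left (Lp.memLp f))
      (hk.mul_of_top_left (Lp.memLp g)) (ae_abs_sub_le_norm_sub f g)).continuous

variable {K : X × X → ℝ}

theorem integrable_mul_mul_fst_snd (hK : Integrable K (μ.prod μ)) (hf : AEStronglyMeasurable f μ)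
    (hfC : ∀ᵐ x ∂μ, |f x| ≤ C) : Integrable (fun y ↦ K y * f y.1 * f y.2) (μ.prod μ) :=
  (hK.mul_bdd hf.comp_fst (Measure.quasiMeasurePreserving_fst.ae hfC)).mul_bdd hf.comp_snd
    (Measure.quasiMeasurePreserving_snd.ae hfC)

theorem abs_integral_mul_mul_sub_le (hK : Integrable K (μ.prod μ))
    (hf : AEStronglyMeasurable f μ) (hg : AEStronglyMeasurable g μ)
    (hfC : ∀ᵐ x ∂μ, |f x| ≤ C) (hgD : ∀ᵐ x ∂μ, |g x| ≤ D) (hM : ∀ᵐ x ∂μ, |f x - g x| ≤ M) :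
    |(∫ y, K y * f y.1 * f y.2 ∂(μ.prod μ)) - ∫ y, K y * g y.1 * g y.2 ∂(μ.prod μ)| ≤
      (∫ y, |K y| ∂(μ.prod μ)) * ((C + D) * M) := by
  have hfst := Measure.quasiMeasurePreserving_fst (μ := μ) (ν := μ)
  have hsnd := Measure.quasiMeasurePreserving_snd (μ := μ) (ν := μ)
  have hKf := integrable_mul_mul_fst_snd hK hf hfC
  have hKg := integrable_mul_mul_fst_snd hK hg hgD
  simp only [mul_assoc] at hKf hKg ⊢
  refine abs_integral_mul_sub_integral_mul_le hK hKf hKg ?_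
  filter_upwards [hfst.ae hfC, hsnd.ae hgD, hfst.ae hM, hsnd.ae hM] with y hf₁ hg₂ hM₁ hM₂
  calc |f y.1 * f y.2 - g y.1 * g y.2|
      = |f y.1 * (f y.2 - g y.2) + g y.2 * (f y.1 - g y.1)| := by ring_nf
    _ ≤ |f y.1| * |f y.2 - g y.2| + |g y.2| * |f y.1 - g y.1| := by
        simpa only [abs_mul] using abs_add_le (f y.1 * (f y.2 - g y.2)) (g y.2 * (f y.1 - g y.1))
    _ ≤ C * M + D * M :=
        add_le_add (mul_le_mul hf₁ hM₂ (abs_nonneg _) ((abs_nonneg _).trans hf₁))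
          (mul_le_mul hg₂ hM₁ (abs_nonneg _) ((abs_nonneg _).trans hg₂))
    _ = (C + D) * M := by ring

theorem continuous_integral_mul_mul_Lp_top (hK : Integrable K (μ.prod μ)) :
    Continuous fun f : Lp ℝ ⊤ μ ↦ ∫ y, K y * f y.1 * f y.2 ∂(μ.prod μ) := by
  refine continuous_iff_continuousAt.2 fun g ↦ tendsto_iff_dist_tendsto_zero.2 ?_
  refine squeeze_zero (fun _ ↦ dist_nonneg) (fun f ↦ abs_integral_mul_mul_sub_le hK
    (Lp.aestronglyMeasurable f) (Lp.aestronglyMeasurable g) (ae_abs_le_norm f) (ae_abs_le_norm g)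
    (ae_abs_sub_le_norm_sub f g)) ?_
  have hbound : Continuous fun f : Lp ℝ ⊤ μ ↦
      (∫ y, |K y| ∂(μ.prod μ)) * ((‖f‖ + ‖g‖) * ‖f - g‖) := by fun_prop
  simpa only [sub_self, norm_zero, mul_zero] using hbound.tendsto g

theorem integral_mul_mul_le_mul_integral [SFinite μ] (hK : Integrable K (μ.prod μ))
    (hK0 : ∀ y, 0 ≤ K y) (ha : Integrable a μ) (hKa : ∀ᵐ x ∂μ, ∫ y, K (x, y) ∂μ ≤ a x)
    (hfm : AEStronglyMeasurable f μ) (hf : ∀ᵐ x ∂μ, f x ∈ Icc 0 C) :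
    ∫ y, K y * f y.1 * f y.2 ∂(μ.prod μ) ≤ C * ∫ x, a x * f x ∂μ := by
  have hfst := Measure.quasiMeasurePreserving_fst (μ := μ) (ν := μ)
  have hsnd := Measure.quasiMeasurePreserving_snd (μ := μ) (ν := μ)
  have hfC : ∀ᵐ x ∂μ, |f x| ≤ C := hf.mono fun x hx ↦ (abs_of_nonneg hx.1).trans_le hx.2
  have hKf : Integrable (fun y ↦ K y * f y.1) (μ.prod μ) := hK.mul_bdd hfm.comp_fst (hfst.ae hfC)
  calc ∫ y, K y * f y.1 * f y.2 ∂(μ.prod μ)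
      ≤ ∫ y, K y * f y.1 * C ∂(μ.prod μ) := by
        refine integral_mono_ae (integrable_mul_mul_fst_snd hK hfm hfC) (hKf.mul_const C) ?_
        filter_upwards [hfst.ae hf, hsnd.ae hf] with y hf₁ hf₂
        exact mul_le_mul_of_nonneg_left hf₂.2 (mul_nonneg (hK0 y) hf₁.1)
    _ = ∫ x, (∫ y, K (x, y) ∂μ) * f x * C ∂μ := by
        rw [integral_prod _ (hKf.mul_const C)]
        simp only [integral_mul_const]
    _ ≤ ∫ x, a x * f x * C ∂μ := by
        refine integral_mono_ae ((hK.integral_prod_left.mul_bdd hfm hfC).mul_const C)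
          ((ha.mul_bdd hfm hfC).mul_const C) ?_
        filter_upwards [hKa, hf] with x hKx hfx
        exact mul_le_mul_of_nonneg_right (mul_le_mul_of_nonneg_right hKx hfx.1)
          (hfx.1.trans hfx.2)
    _ = C * ∫ x, a x * f x ∂μ := by rw [integral_mul_const, mul_comm]

end IntegralForms

section Vlasov

variable {X : Type*} [MeasurableSpace X] {μ : Measure X} {c : X → X → X → X → ℝ} {x : X}

/-- The rate `a₁(x,y) = ∫∫ c(x,y,u₁,u₂) du₁du₂` at which `y` removes `x`, over a general space. -/
def lossKernel (μ : Measure X) (c : X → X → X → X → ℝ) (x y : X) : ℝ :=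
  ∫ u : X × X, c x y u.1 u.2 ∂(μ.prod μ)

/-- The rate `c̃(y₁,y₂,x) = ∫ c(y₁,y₂,x,u) du` at which the pair `y = (y₁,y₂)` creates `x`, over a
general space. -/
def gainKernel (μ : Measure X) (c : X → X → X → X → ℝ) (x : X) (y : X × X) : ℝ :=
  ∫ u, c y.1 y.2 x u ∂μ

/-- The fixed-point map `Φ` of the Vlasov equation over a general space. For `X = ℝ^d` with Lebesgue
measure it unfolds to `PhiMap`. -/
def vlasovMap (μ : Measure X) (c : X → X → X → X → ℝ) (p₀ : X → ℝ) (V : ℝ → Lp ℝ ⊤ μ) (t : ℝ)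
    (x : X) : ℝ :=
  duhamel (fun s ↦ ∫ y, lossKernel μ c x y * V s y ∂μ)
    (fun s ↦ ∫ y, gainKernel μ c x y * V s y.1 * V s y.2 ∂(μ.prod μ)) (p₀ x) t

theorem lossKernel_nonneg (hc : ∀ x₁ x₂ y₁ y₂, 0 ≤ c x₁ x₂ y₁ y₂) (y : X) :
    0 ≤ lossKernel μ c x y :=
  integral_nonneg fun _ ↦ hc _ _ _ _

theorem gainKernel_nonneg (hc : ∀ x₁ x₂ y₁ y₂, 0 ≤ c x₁ x₂ y₁ y₂) (y : X × X) :
    0 ≤ gainKernel μ c x y :=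
  integral_nonneg fun _ ↦ hc _ _ _ _

variable [SFinite μ]

theorem integral_lossKernel
    (h : Integrable (fun q : X × X × X ↦ c x q.1 q.2.1 q.2.2) (μ.prod (μ.prod μ))) :
    ∫ y, lossKernel μ c x y ∂μ =
      ∫ q : X × X × X, c x q.1 q.2.1 q.2.2 ∂(μ.prod (μ.prod μ)) :=
  (integral_prod _ h).symm

theorem integral_gainKernel
    (h : Integrable (fun q : X × X × X ↦ c q.2.1 q.2.2 x q.1) (μ.prod (μ.prod μ))) :
    ∫ y, gainKernel μ c x y ∂(μ.prod μ) =
      ∫ q : X × X × X, c q.2.1 q.2.2 x q.1 ∂(μ.prod (μ.prod μ)) :=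
  (integral_prod_symm _ h).symm

theorem ae_integral_gainKernel_eq
    (h : Integrable (fun q : X × X × X ↦ c q.2.1 q.2.2 x q.1) (μ.prod (μ.prod μ))) :
    ∀ᵐ y ∂μ, ∫ z, gainKernel μ c x (y, z) ∂μ = ∫ u : X × X, c y u.1 x u.2 ∂(μ.prod μ) := by
  have hassoc : Integrable (fun q : X × X × X ↦ c q.1 q.2.1 x q.2.2) (μ.prod (μ.prod μ)) := by
    rw [← Measure.prodAssoc_prod, integrable_map_equiv]
    exact h.swap
  filter_upwards [hassoc.prod_right_ae] with y hy
  exact (integral_prod _ hy).symm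

theorem abs_vlasovMap_sub_le (hc : ∀ x₁ x₂ y₁ y₂, 0 ≤ c x₁ x₂ y₁ y₂)
    (hloss : Integrable (lossKernel μ c x) μ) (hgain : Integrable (gainKernel μ c x) (μ.prod μ))
    (hgl : ∀ᵐ y ∂μ, ∫ z, gainKernel μ c x (y, z) ∂μ ≤ lossKernel μ c x y)
    {C M t T : ℝ} {p₀ : X → ℝ} (hp₀ : p₀ x ∈ Icc 0 C) {V W : ℝ → Lp ℝ ⊤ μ}
    (hVcont : ContinuousOn V (Icc 0 T)) (hWcont : ContinuousOn W (Icc 0 T))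
    (hV : ∀ s ∈ Icc 0 T, ∀ᵐ y ∂μ, V s y ∈ Icc 0 C) (hW : ∀ s ∈ Icc 0 T, ∀ᵐ y ∂μ, W s y ∈ Icc 0 C)
    (hM : ∀ s ∈ Icc 0 T, ∀ᵐ y ∂μ, |V s y - W s y| ≤ M) (ht : t ∈ Icc 0 T) :
    |vlasovMap μ c p₀ V t x - vlasovMap μ c p₀ W t x| ≤
      C * ((∫ y, lossKernel μ c x y ∂μ) + 2 * ∫ y, gainKernel μ c x y ∂(μ.prod μ)) * M * t := by
  have habs : ∀ {f : X → ℝ}, (∀ᵐ y ∂μ, f y ∈ Icc 0 C) → ∀ᵐ y ∂μ, |f y| ≤ C :=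
    fun hf ↦ hf.mono fun y hy ↦ (abs_of_nonneg hy.1).trans_le hy.2
  have hloss_cont := continuous_integral_mul_Lp_top hloss
  have hgain_cont := continuous_integral_mul_mul_Lp_top hgain
  have hloss_diff := fun s hs ↦ abs_integral_mul_sub_integral_mul_le hloss
    (hloss.mul_of_top_left (Lp.memLp (V s))) (hloss.mul_of_top_left (Lp.memLp (W s))) (hM s hs)
  have hgain_diff := fun s hs ↦ abs_integral_mul_mul_sub_le hgain (Lp.aestronglyMeasurable (V s))
    (Lp.aestronglyMeasurable (W s)) (habs (hV s hs)) (habs (hW s hs)) (hM s hs)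
  simp only [abs_of_nonneg (lossKernel_nonneg hc _)] at hloss_diff
  simp only [abs_of_nonneg (gainKernel_nonneg hc _)] at hgain_diff
  refine (abs_duhamel_sub_le (hloss_cont.comp_continuousOn hVcont)
    (hloss_cont.comp_continuousOn hWcont) (hgain_cont.comp_continuousOn hVcont)
    (hgain_cont.comp_continuousOn hWcont) hp₀ (fun s hs ↦ integral_nonneg_of_ae ?_)
    (fun s hs ↦ integral_nonneg_of_ae ?_) (fun s hs ↦ ?_) hloss_diff hgain_diff ht).trans_eq ?_
  · filter_upwards [hV s hs] with y hy
    exact mul_nonneg (lossKernel_nonneg hc y) hy.1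
  · filter_upwards [Measure.quasiMeasurePreserving_fst.ae (hW s hs),
      Measure.quasiMeasurePreserving_snd.ae (hW s hs)] with y hy₁ hy₂
    exact mul_nonneg (mul_nonneg (gainKernel_nonneg hc y) hy₁.1) hy₂.1
  · exact integral_mul_mul_le_mul_integral hgain (gainKernel_nonneg hc) hloss hgl
      (Lp.aestronglyMeasurable (W s)) (hW s hs)
  · ring

theorem statement14_general (hc : ∀ x₁ x₂ y₁ y₂, 0 ≤ c x₁ x₂ y₁ y₂) {c₃ c₄ : ℝ}
    (hc₃int : ∀ᵐ x₁ ∂μ,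
      Integrable (fun q : X × X × X ↦ c x₁ q.1 q.2.1 q.2.2) (μ.prod (μ.prod μ)))
    (hc₃ : ∀ᵐ x₁ ∂μ, ∫ q : X × X × X, c x₁ q.1 q.2.1 q.2.2 ∂(μ.prod (μ.prod μ)) ≤ c₃)
    (hc₄int : ∀ᵐ x₁ ∂μ,
      Integrable (fun q : X × X × X ↦ c q.2.1 q.2.2 x₁ q.1) (μ.prod (μ.prod μ)))
    (hc₄ : ∀ᵐ x₁ ∂μ, ∫ q : X × X × X, c q.2.1 q.2.2 x₁ q.1 ∂(μ.prod (μ.prod μ)) ≤ c₄)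
    (hchr : ∀ᵐ p : X × X ∂(μ.prod μ),
      ∫ u : X × X, c p.2 u.1 p.1 u.2 ∂(μ.prod μ) ≤ lossKernel μ c p.1 p.2)
    {C M T t : ℝ} {p₀ : X → ℝ} (hp₀ : ∀ᵐ x ∂μ, p₀ x ∈ Icc 0 C) {V W : ℝ → Lp ℝ ⊤ μ}
    (hVcont : ContinuousOn V (Icc 0 T)) (hWcont : ContinuousOn W (Icc 0 T))
    (hV : ∀ s ∈ Icc 0 T, ∀ᵐ x ∂μ, V s x ∈ Icc 0 C) (hW : ∀ s ∈ Icc 0 T, ∀ᵐ x ∂μ, W s x ∈ Icc 0 C)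
    (hM0 : 0 ≤ M) (hM : ∀ s ∈ Icc 0 T, ∀ᵐ x ∂μ, |V s x - W s x| ≤ M) (ht : t ∈ Icc 0 T) :
    ∀ᵐ x ∂μ, |vlasovMap μ c p₀ V t x - vlasovMap μ c p₀ W t x| ≤ 2 * C * (c₃ + c₄) * T * M := by
  filter_upwards [hc₃int, hc₃, hc₄int, hc₄, Measure.ae_ae_of_ae_prod hchr, hp₀]
    with x hloss hloss_le hgain hgain_le hx hp
  have hgl : ∀ᵐ y ∂μ, ∫ z, gainKernel μ c x (y, z) ∂μ ≤ lossKernel μ c x y := by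
    filter_upwards [ae_integral_gainKernel_eq hgain, hx] with y hy hle
    exact hy.trans_le hle
  rw [← integral_lossKernel hloss] at hloss_le
  rw [← integral_gainKernel hgain] at hgain_le
  have hc₃0 : 0 ≤ c₃ := (integral_nonneg (lossKernel_nonneg hc)).trans hloss_le
  have hc₄0 : 0 ≤ c₄ := (integral_nonneg (gainKernel_nonneg hc)).trans hgain_le
  have hC : 0 ≤ C := hp.1.trans hp.2
  have ht0 : 0 ≤ t := ht.1
  calc |vlasovMap μ c p₀ V t x - vlasovMap μ c p₀ W t x|
      ≤ C * ((∫ y, lossKernel μ c x y ∂μ) + 2 * ∫ y, gainKernel μ c x y ∂(μ.prod μ)) * M * t :=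
        abs_vlasovMap_sub_le hc hloss.integral_prod_left hgain.swap.integral_prod_left hgl hp
          hVcont hWcont hV hW hM ht
    _ ≤ C * (2 * c₃ + 2 * c₄) * M * T := by
        gcongr
        · linarith
        · exact ht.2
    _ = 2 * C * (c₃ + c₄) * T * M := by ring

end Vlasov

/-- Lipschitz estimate for `Φ` on curves with values in `[0,C]` on a
time interval `[0,Υ]`:
`sup_{t∈[0,Υ]} ‖(Φv)_t − (Φw)_t‖_∞ ≤ 2C(c₃+c₄)Υ · sup_{t∈[0,Υ]} ‖v_t − w_t‖_∞`. -/
theorem statement14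
    (d : ℕ) (hd : 1 ≤ d)
    (c : Rd d → Rd d → Rd d → Rd d → ℝ)
    (hc_meas : Measurable fun p : (Rd d × Rd d) × Rd d × Rd d => c p.1.1 p.1.2 p.2.1 p.2.2)
    (hc_nonneg : ∀ x₁ x₂ y₁ y₂, 0 ≤ c x₁ x₂ y₁ y₂)
    (c₁ c₃ c₄ : ℝ)
    (hc₁int : ∀ᵐ x : Rd d × Rd d, Integrable fun y : Rd d × Rd d => c x.1 x.2 y.1 y.2)
    (hc₁ : ∀ᵐ x : Rd d × Rd d, (∫ y : Rd d × Rd d, c x.1 x.2 y.1 y.2) ≤ c₁)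
    (hc₃int : ∀ᵐ x₁ : Rd d,
      Integrable fun q : Rd d × Rd d × Rd d => c x₁ q.1 q.2.1 q.2.2)
    (hc₃ : ∀ᵐ x₁ : Rd d, (∫ q : Rd d × Rd d × Rd d, c x₁ q.1 q.2.1 q.2.2) ≤ c₃)
    (hc₄int : ∀ᵐ x₁ : Rd d,
      Integrable fun q : Rd d × Rd d × Rd d => c q.2.1 q.2.2 x₁ q.1)
    (hc₄ : ∀ᵐ x₁ : Rd d, (∫ q : Rd d × Rd d × Rd d, c q.2.1 q.2.2 x₁ q.1) ≤ c₄)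
    -- `∫∫ c(y,u₁,x,u₂) du₁du₂ ≤ a₁(x,y)` for a.e. `(x,y)`
    (hchr : ∀ᵐ p : Rd d × Rd d,
      (∫ u : Rd d × Rd d, c p.2 u.1 p.1 u.2) ≤ a1f d c p.1 p.2)
    (C : ℝ) (hC : 0 < C)
    (p₀ : Lp ℝ ⊤ (volume : Measure (Rd d)))
    (hp₀ : ∀ᵐ x : Rd d, 0 ≤ p₀ x ∧ p₀ x ≤ C)
    (Υ : ℝ) (hΥ : 0 < Υ)
    (V W : ℝ → Lp ℝ ⊤ (volume : Measure (Rd d)))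
    (hVcont : ContinuousOn V (Set.Icc 0 Υ)) (hWcont : ContinuousOn W (Set.Icc 0 Υ))
    (hV : ∀ t ∈ Set.Icc (0 : ℝ) Υ, ∀ᵐ x : Rd d, 0 ≤ V t x ∧ V t x ≤ C)
    (hW : ∀ t ∈ Set.Icc (0 : ℝ) Υ, ∀ᵐ x : Rd d, 0 ≤ W t x ∧ W t x ≤ C) :
    ∀ M : ℝ, 0 ≤ M →
      (∀ t ∈ Set.Icc (0 : ℝ) Υ, ∀ᵐ x : Rd d, |V t x - W t x| ≤ M) →
      ∀ t ∈ Set.Icc (0 : ℝ) Υ, ∀ᵐ x : Rd d,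
        |PhiMap d c p₀ V t x - PhiMap d c p₀ W t x| ≤ 2 * C * (c₃ + c₄) * Υ * M :=
  fun _ hM hVW _ ht ↦ statement14_general hc_nonneg hc₃int hc₃ hc₄int hc₄ hchr hp₀ hVcont hWcont
    hV hW hM hVW ht
end
end

section
/- Suppose p : [0,T] → L^∞(ℝ^d) is such that for a.e. x ∈ ℝ^d the map t ↦ p_t(x) is differentiable on [0,T] with ∂_t p_t(x) = ∫∫ c̃(y₁,y₂,x) p_t(y₁) p_t(y₂) dy₁dy₂ − p_t(x) ∫ a₁(x,y) p_t(y) dy (the Vlasov equation), and sup_t ‖p_t‖_{L^∞} < ∞, c₁, c₃ < ∞. Then for every n ≥ 1, the product functions k_t^(n)(x₁,…,xₙ) := Π_{i=1}^n p_t(x_i) satisfy, for a.e. (x₁,…,xₙ) and all t, the hierarchy equation ∂_t k_t^(n)(x₁,…,xₙ) = Σ_{j=1}^n ∫∫ c̃(u₁,u₂,x_j) k_t^(n+1)(u₁,u₂,x₁,…,x̂_j,…,xₙ) du₁du₂ − Σ_{j=1}^n ∫ a₁(x_j,u) k_t^(n+1)(x₁,…,xₙ,u) du, where x̂_j means the j-th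 argument is omitted. In other words, the Lebesgue–Poisson exponents e_λ(p_t) solve ∂_t k = W⋆k, so the limiting Vlasov dynamics preserves Poisson (chaotic) states. -/
open MeasureTheory

noncomputable section

/-!
The operator `W⋆` acts on a product state point by point: the factors that do not involve the
integration variables come out of the integrals, leaving at each point `x` of the configuration the
right-hand side of the Vlasov equation at `x` times the product over the other points. By the
product rule this is the time derivative of the product. The points where the Vlasov equation may
fail form a null set, which pulls back along the finitely many coordinates to a null set.
-/

lemma hasDerivWithinAt_multiset_prod {𝕜 𝔸 ι : Type*} [NontriviallyNormedField 𝕜]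
    [NormedCommRing 𝔸] [NormedAlgebra 𝕜 𝔸] [DecidableEq ι] {f : 𝕜 → ι → 𝔸} {f' : ι → 𝔸}
    {u : Multiset ι} {s : Set 𝕜} {t : 𝕜}
    (hf : ∀ i ∈ u, HasDerivWithinAt (fun r => f r i) (f' i) s t) :
    HasDerivWithinAt (fun r => (u.map (f r)).prod)
      (u.map fun i => ((u.erase i).map (f t)).prod * f' i).sum s t := by
  have product_rule :=
    (HasFDerivWithinAt.multiset_prod fun i hi => (hf i hi).hasFDerivWithinAt).hasDerivWithinAt
  refine product_rule.congr_deriv ?_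
  rw [← ContinuousLinearMap.apply_apply, map_multiset_sum, Multiset.map_map]
  simp only [Function.comp_def, ContinuousLinearMap.apply_apply, smul_apply,
    ContinuousLinearMap.toSpanSingleton_apply_one, smul_eq_mul]

section LebesguePoisson

/-- The Lebesgue–Poisson exponent `e_λ(f)(η) = ∏_{x ∈ η} f(x)`: the correlation functional of the
Poisson state with density `f`, as a function of finite configurations. Encoding configurations as
multisets builds in the symmetry under permutations of the points. -/
def lebesguePoissonExp {E R : Type*} [CommMonoid R] (f : E → R) (η : Multiset E) : R :=
  (η.map f).prod

lemma lebesguePoissonExp_add {E R : Type*} [CommMonoid R] (f : E → R) (η ξ : Multiset E) :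
    lebesguePoissonExp f (η + ξ) = lebesguePoissonExp f η * lebesguePoissonExp f ξ := by
  simp only [lebesguePoissonExp, Multiset.map_add, Multiset.prod_add]

lemma lebesguePoissonExp_singleton {E R : Type*} [CommMonoid R] (f : E → R) (x : E) :
    lebesguePoissonExp f {x} = f x := by
  simp only [lebesguePoissonExp, Multiset.map_singleton, Multiset.prod_singleton]

lemma lebesguePoissonExp_pair {E R : Type*} [CommMonoid R] (f : E → R) (x y : E) :
    lebesguePoissonExp f {x, y} = f x * f y := by
  simp only [lebesguePoissonExp, Multiset.insert_eq_cons, Multiset.map_cons,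
    Multiset.map_singleton, Multiset.prod_cons, Multiset.prod_singleton]

lemma mul_lebesguePoissonExp_erase {E R : Type*} [CommMonoid R] [DecidableEq E] (f : E → R)
    {η : Multiset E} {x : E} (hx : x ∈ η) :
    f x * lebesguePoissonExp f (η.erase x) = lebesguePoissonExp f η :=
  Multiset.prod_map_erase hx

lemma lebesguePoissonExp_map {E ι R : Type*} [CommMonoid R] (f : E → R) (x : ι → E)
    (s : Finset ι) : lebesguePoissonExp f (s.val.map x) = ∏ i ∈ s, f (x i) := by
  simp only [lebesguePoissonExp, Multiset.map_map, Function.comp_def, Finset.prod_map_val]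

variable {E 𝕂 : Type*} [MeasurableSpace E] [RCLike 𝕂]

/-- The right-hand side of the Vlasov equation with gain kernel `b` (the paper's `c̃`) and loss
kernel `a` (the paper's `a₁`), at the density `f` and the point `x`. -/
def vlasovField (μ : Measure E) (b : E → E → E → 𝕂) (a : E → E → 𝕂) (f : E → 𝕂) (x : E) : 𝕂 :=
  (∫ u : E × E, b u.1 u.2 x * (f u.1 * f u.2) ∂μ.prod μ) - f x * ∫ u, a x u * f u ∂μ

/-- The operator `W⋆` of the limiting hierarchy with gain kernel `b` and loss kernel `a`, acting on
functions of finite configurations. In the paper's notation `k⁽ⁿ⁾(x₁,…,xₙ)` is the value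
of `k` at the multiset of the `xᵢ`, and `η.erase x` omits one occurrence of `x`. -/
def vlasovHierarchyOp [DecidableEq E] (μ : Measure E) (b : E → E → E → 𝕂) (a : E → E → 𝕂)
    (k : Multiset E → 𝕂) (η : Multiset E) : 𝕂 :=
  (η.map fun x => ∫ u : E × E, b u.1 u.2 x * k ({u.1, u.2} + η.erase x) ∂μ.prod μ).sum -
    (η.map fun x => ∫ u, a x u * k (η + {u}) ∂μ).sum

variable [DecidableEq E] {μ : Measure E} {b : E → E → E → 𝕂} {a : E → E → 𝕂}

lemma vlasovHierarchyOp_lebesguePoissonExp (f : E → 𝕂) (η : Multiset E) :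
    vlasovHierarchyOp μ b a (lebesguePoissonExp f) η =
      (η.map fun x => lebesguePoissonExp f (η.erase x) * vlasovField μ b a f x).sum := by
  rw [vlasovHierarchyOp, ← Multiset.sum_map_sub]
  refine congrArg Multiset.sum (Multiset.map_congr rfl fun x hx => ?_)
  have gain : ∫ u : E × E, b u.1 u.2 x * lebesguePoissonExp f ({u.1, u.2} + η.erase x) ∂μ.prod μ =
      (∫ u : E × E, b u.1 u.2 x * (f u.1 * f u.2) ∂μ.prod μ) *
        lebesguePoissonExp f (η.erase x) := by
    simp only [lebesguePoissonExp_add, lebesguePoissonExp_pair, ← mul_assoc, integral_mul_const]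
  have loss : ∫ u, a x u * lebesguePoissonExp f (η + {u}) ∂μ =
      lebesguePoissonExp f η * ∫ u, a x u * f u ∂μ := by
    simp only [lebesguePoissonExp_add, lebesguePoissonExp_singleton, mul_left_comm (a x _),
      integral_const_mul]
  rw [gain, loss, ← mul_lebesguePoissonExp_erase f hx, vlasovField]
  ring

lemma vlasovHierarchyOp_lebesguePoissonExp_map_univ {ι : Type*} [Fintype ι] [DecidableEq ι]
    (f : E → 𝕂) (x : ι → E) :
    vlasovHierarchyOp μ b a (lebesguePoissonExp f) (Finset.univ.val.map x) =
      (∑ j, ∫ u : E × E, b u.1 u.2 (x j) *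
          (f u.1 * f u.2 * ∏ i ∈ Finset.univ.erase j, f (x i)) ∂μ.prod μ) -
        ∑ j, ∫ u, a (x j) u * ((∏ i, f (x i)) * f u) ∂μ := by
  have map_erase (j : ι) :
      (Finset.univ.val.map x).erase (x j) = (Finset.univ.erase j).val.map x := by
    rw [Finset.erase_val, Multiset.map_erase_of_mem x _ (Finset.mem_univ_val j)]
  simp only [vlasovHierarchyOp, Multiset.map_map, Function.comp_def, Finset.sum_map_val, map_erase,
    lebesguePoissonExp_add, lebesguePoissonExp_pair, lebesguePoissonExp_singleton,
    lebesguePoissonExp_map]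

variable {p : ℝ → E → 𝕂} {S : Set ℝ}

lemma hasDerivWithinAt_lebesguePoissonExp {η : Multiset E} {t : ℝ}
    (hp : ∀ x ∈ η, HasDerivWithinAt (fun s => p s x) (vlasovField μ b a (p t) x) S t) :
    HasDerivWithinAt (fun s => lebesguePoissonExp (p s) η)
      (vlasovHierarchyOp μ b a (lebesguePoissonExp (p t)) η) S t := by
  rw [vlasovHierarchyOp_lebesguePoissonExp]
  exact hasDerivWithinAt_multiset_prod hp

theorem statement15_general {ι : Type*} [Fintype ι] [SigmaFinite μ]
    (hp : ∀ᵐ x ∂μ, ∀ t ∈ S,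
      HasDerivWithinAt (fun s => p s x) (vlasovField μ b a (p t) x) S t) :
    ∀ᵐ x : ι → E ∂Measure.pi fun _ => μ, ∀ t ∈ S,
      HasDerivWithinAt (fun s => lebesguePoissonExp (p s) (Finset.univ.val.map x))
        (vlasovHierarchyOp μ b a (lebesguePoissonExp (p t)) (Finset.univ.val.map x)) S t := by
  have hp_coord : ∀ᵐ x : ι → E ∂Measure.pi fun _ => μ, ∀ i, ∀ t ∈ S,
      HasDerivWithinAt (fun s => p s (x i)) (vlasovField μ b a (p t) (x i)) S t :=
    Measure.ae_pi_le_pi (Filter.eventually_pi fun _ => hp)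
  filter_upwards [hp_coord] with x hx t ht
  refine hasDerivWithinAt_lebesguePoissonExp fun y hy => ?_
  obtain ⟨i, -, rfl⟩ := Multiset.mem_map.1 hy
  exact hx i t ht

end LebesguePoisson

/-- If `p_t` solves the Vlasov equation
`∂_t p_t(x) = ∫∫ c̃(y₁,y₂,x)p_t(y₁)p_t(y₂) dy₁dy₂ − p_t(x)∫ a₁(x,y)p_t(y) dy`
(pointwise for a.e. `x`, uniformly bounded), then the Lebesgue–Poisson exponents
`k_t⁽ⁿ⁾(x₁,…,xₙ) = Π p_t(xᵢ)` solve the limiting hierarchy `∂_t k = W⋆k`: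
the Vlasov dynamics preserves Poisson (chaotic) states. -/
theorem statement15
    (d : ℕ) (hd : 1 ≤ d)
    (c : Rd d → Rd d → Rd d → Rd d → ℝ)
    (hc_meas : Measurable fun p : (Rd d × Rd d) × Rd d × Rd d => c p.1.1 p.1.2 p.2.1 p.2.2)
    (hc_nonneg : ∀ x₁ x₂ y₁ y₂, 0 ≤ c x₁ x₂ y₁ y₂)
    (c₁ c₃ : ℝ)
    (hc₁int : ∀ᵐ x : Rd d × Rd d, Integrable fun y : Rd d × Rd d => c x.1 x.2 y.1 y.2)
    (hc₁ : ∀ᵐ x : Rd d × Rd d, (∫ y : Rd d × Rd d, c x.1 x.2 y.1 y.2) ≤ c₁)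
    (hc₃int : ∀ᵐ x₁ : Rd d,
      Integrable fun q : Rd d × Rd d × Rd d => c x₁ q.1 q.2.1 q.2.2)
    (hc₃ : ∀ᵐ x₁ : Rd d, (∫ q : Rd d × Rd d × Rd d, c x₁ q.1 q.2.1 q.2.2) ≤ c₃)
    (T : ℝ) (hT : 0 < T)
    (p : ℝ → Rd d → ℝ)
    (hp_meas : ∀ t : ℝ, AEStronglyMeasurable (p t) volume)
    -- `sup_t ‖p_t‖_∞ < ∞`
    (M : ℝ) (hbd : ∀ t ∈ Set.Icc (0 : ℝ) T, ∀ᵐ x : Rd d, |p t x| ≤ M)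
    -- `p` solves the Vlasov equation pointwise, for a.e. `x`, on `[0,T]`
    (hVlasov : ∀ᵐ x : Rd d, ∀ t ∈ Set.Icc (0 : ℝ) T,
      HasDerivWithinAt (fun s : ℝ => p s x)
        ((∫ u : Rd d × Rd d, ctil3 d c u.1 u.2 x * (p t u.1 * p t u.2)) -
          p t x * ∫ u : Rd d, a1f d c x u * p t u)
        (Set.Icc (0 : ℝ) T) t) :
    ∀ n : ℕ, 1 ≤ n → ∀ᵐ x : Fin n → Rd d, ∀ t ∈ Set.Icc (0 : ℝ) T,
      HasDerivWithinAt (fun s : ℝ => ∏ i : Fin n, p s (x i))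
        ((∑ j : Fin n, ∫ u : Rd d × Rd d, ctil3 d c u.1 u.2 (x j) *
            (p t u.1 * p t u.2 * ∏ i ∈ Finset.univ.erase j, p t (x i))) -
          ∑ j : Fin n, ∫ u : Rd d, a1f d c (x j) u *
            ((∏ i : Fin n, p t (x i)) * p t u))
        (Set.Icc (0 : ℝ) T) t := by
  intro n _
  simpa only [vlasovHierarchyOp_lebesguePoissonExp_map_univ, lebesguePoissonExp_map, volume_pi,
    Measure.volume_eq_prod] using
    statement15_general (ι := Fin n) (b := ctil3 d c) (a := a1f d c) hVlasov
end
end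

section
/- Let α be a type with decidable equality, and let h : Finset α → α → α → ℝ. For F : Finset α → ℝ define (K⁻¹F)(η) := Σ_{ξ ⊆ η} (−1)^{|η∖ξ|} F(ξ). Then for every finite set η ∈ Finset α: K⁻¹( γ ↦ Σ_{{x₁,x₂} ⊆ γ} h(γ∖{x₁,x₂}, x₁, x₂) )(η) = Σ_{{x₁,x₂} ⊆ η} (K⁻¹ h(·, x₁, x₂))(η ∖ {x₁,x₂}), where the sums Σ_{{x₁,x₂}⊆γ} run over all unordered pairs of distinct elements x₁, x₂ of γ, and h is assumed symmetric in its last two arguments (h(ξ,x₁,x₂) = h(ξ,x₂,x₁)). -/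
/-!
A subset of `η` containing `x ∈ η` is `insert x ξ` for a unique `ξ ⊆ η.erase x`, and
`η \ insert x ξ = η.erase x \ ξ`, so the signs in `K⁻¹` do not change when `x` is removed. Summing
over `x` gives the one-point identity
`K⁻¹(γ ↦ ∑_{x ∈ γ} H(γ ∖ x, x))(η) = ∑_{x ∈ η} (K⁻¹ H(·, x))(η ∖ x)`.
A sum over ordered pairs of distinct points is a sum over one point `x` followed by a sum over one
point of `γ ∖ x`, so two applications of this identity give the one for pairs.
-/

noncomputable section

/-- The inverse K-transform on finite configurations:
`(K⁻¹F)(η) = Σ_{ξ ⊆ η} (−1)^{|η∖ξ|} F(ξ)`. -/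
def Kinv {α : Type*} [DecidableEq α] (F : Finset α → ℝ) (η : Finset α) : ℝ :=
  ∑ ξ ∈ η.powerset, (-1 : ℝ) ^ (η \ ξ).card * F ξ

/-- The sum `Σ_{{x₁,x₂} ⊆ γ} F(x₁,x₂)` over all unordered pairs of distinct elements of
`γ` (for `F` symmetric this equals half the sum over ordered pairs). -/
def pairSum {α : Type*} [DecidableEq α] (F : α → α → ℝ) (γ : Finset α) : ℝ :=
  (1 / 2 : ℝ) * ∑ x₁ ∈ γ, ∑ x₂ ∈ γ.erase x₁, F x₁ x₂

section Kinv

variable {α : Type*} [DecidableEq α]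

theorem Kinv_congr {F G : Finset α → ℝ} {η : Finset α} (hFG : ∀ ξ ⊆ η, F ξ = G ξ) :
    Kinv F η = Kinv G η :=
  Finset.sum_congr rfl fun ξ hξ => by rw [hFG ξ (Finset.mem_powerset.mp hξ)]

theorem Kinv_const_mul (c : ℝ) (F : Finset α → ℝ) (η : Finset α) :
    Kinv (fun ξ => c * F ξ) η = c * Kinv F η := by
  simp only [Kinv, Finset.mul_sum, mul_left_comm]

theorem Kinv_sum {ι : Type*} (s : Finset ι) (F : ι → Finset α → ℝ) (η : Finset α) :
    Kinv (fun ξ => ∑ i ∈ s, F i ξ) η = ∑ i ∈ s, Kinv (F i) η := by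
  simp only [Kinv, Finset.mul_sum]
  exact Finset.sum_comm

theorem Kinv_insert_ite_mem_erase {x : α} {η : Finset α} (hx : x ∉ η) (F : Finset α → ℝ) :
    Kinv (fun ξ => if x ∈ ξ then F (ξ.erase x) else 0) (insert x η) = Kinv F η := by
  have notMem_of_mem_powerset {ξ : Finset α} (hξ : ξ ∈ η.powerset) : x ∉ ξ :=
    Finset.notMem_of_mem_powerset_of_notMem hξ hx
  unfold Kinv
  rw [Finset.sum_powerset_insert hx, Finset.sum_eq_zero, zero_add]
  · refine Finset.sum_congr rfl fun ξ hξ => ?_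
    simp only [Finset.mem_insert_self, if_true, Finset.erase_insert (notMem_of_mem_powerset hξ),
      Finset.insert_sdiff_insert, Finset.sdiff_insert_of_notMem hx]
  · intro ξ hξ
    simp only [notMem_of_mem_powerset hξ, if_false, mul_zero]

theorem Kinv_ite_mem_erase {x : α} {η : Finset α} (hx : x ∈ η) (F : Finset α → ℝ) :
    Kinv (fun ξ => if x ∈ ξ then F (ξ.erase x) else 0) η = Kinv F (η.erase x) := by
  simpa only [Finset.insert_erase hx] using Kinv_insert_ite_mem_erase (Finset.notMem_erase x η) F

theorem Kinv_sum_erase (H : Finset α → α → ℝ) (η : Finset α) :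
    Kinv (fun γ => ∑ x ∈ γ, H (γ.erase x) x) η =
      ∑ x ∈ η, Kinv (fun ξ => H ξ x) (η.erase x) := by
  calc Kinv (fun γ => ∑ x ∈ γ, H (γ.erase x) x) η
      = Kinv (fun γ => ∑ x ∈ η, if x ∈ γ then H (γ.erase x) x else 0) η :=
        Kinv_congr fun γ hγ => by
          rw [Finset.sum_ite_mem, Finset.inter_eq_right.mpr hγ]
    _ = ∑ x ∈ η, Kinv (fun γ => if x ∈ γ then H (γ.erase x) x else 0) η := Kinv_sum _ _ _
    _ = ∑ x ∈ η, Kinv (fun ξ => H ξ x) (η.erase x) :=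
        Finset.sum_congr rfl fun x hx => Kinv_ite_mem_erase hx fun ξ => H ξ x

theorem sdiff_pair_eq_erase_erase (γ : Finset α) (x y : α) :
    γ \ {x, y} = (γ.erase x).erase y := by
  rw [Finset.sdiff_insert, Finset.sdiff_singleton_eq_erase, Finset.erase_right_comm]

theorem Kinv_sum_sum_erase (h : Finset α → α → α → ℝ) (η : Finset α) :
    Kinv (fun γ => ∑ x ∈ γ, ∑ y ∈ γ.erase x, h (γ \ {x, y}) x y) η =
      ∑ x ∈ η, ∑ y ∈ η.erase x, Kinv (fun ξ => h ξ x y) (η \ {x, y}) := by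
  simp only [sdiff_pair_eq_erase_erase]
  calc Kinv (fun γ => ∑ x ∈ γ, ∑ y ∈ γ.erase x, h ((γ.erase x).erase y) x y) η
      = ∑ x ∈ η, Kinv (fun ξ => ∑ y ∈ ξ, h (ξ.erase y) x y) (η.erase x) :=
        Kinv_sum_erase (fun ξ x => ∑ y ∈ ξ, h (ξ.erase y) x y) η
    _ = ∑ x ∈ η, ∑ y ∈ η.erase x, Kinv (fun ξ => h ξ x y) ((η.erase x).erase y) :=
        Finset.sum_congr rfl fun x _ => Kinv_sum_erase (fun ξ y => h ξ x y) (η.erase x)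

theorem statement16_general (h : Finset α → α → α → ℝ) (η : Finset α) :
    Kinv (fun γ => pairSum (fun x₁ x₂ => h (γ \ {x₁, x₂}) x₁ x₂) γ) η =
      pairSum (fun x₁ x₂ => Kinv (fun ξ => h ξ x₁ x₂) (η \ {x₁, x₂})) η := by
  unfold pairSum
  rw [Kinv_const_mul, Kinv_sum_sum_erase]

end Kinv

/-- The combinatorial identity
`K⁻¹(γ ↦ Σ_{{x₁,x₂}⊆γ} h(γ∖{x₁,x₂},x₁,x₂))(η)
 = Σ_{{x₁,x₂}⊆η} (K⁻¹ h(·,x₁,x₂))(η∖{x₁,x₂})`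
for every `h` symmetric in its last two arguments. -/
theorem statement16 {α : Type*} [DecidableEq α]
    (h : Finset α → α → α → ℝ)
    (hsym : ∀ ξ : Finset α, ∀ x₁ x₂ : α, h ξ x₁ x₂ = h ξ x₂ x₁)
    (η : Finset α) :
    Kinv (fun γ => pairSum (fun x₁ x₂ => h (γ \ {x₁, x₂}) x₁ x₂) γ) η =
      pairSum (fun x₁ x₂ => Kinv (fun ξ => h ξ x₁ x₂) (η \ {x₁, x₂})) η :=
  statement16_general h η
end
end

section
/- Let α be a type with decidable equality and G : Finset α → ℝ. Define the K-transform (KG)(γ) := Σ_{η ⊆ γ} G(η) (sum over all subsets of the finite set γ). Then for every finite set γ ∈ Finset α, every two distinct elements x₁, x₂ ∈ γ, and every two distinct elements y₁, y₂ ∉ γ: (KG)((γ∖{x₁,x₂}) ∪ {y₁,y₂}) − (KG)(γ) = (K D)(γ∖{x₁,x₂}), where D : Finset α → ℝ is the function D(η) := G(η∪{y₁}) + G(η∪{y₂}) + G(η∪{y₁,y₂}) − G(η∪{x₁}) − G(η∪{x₂}) − G(η∪{x₁,x₂}). -/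
noncomputable section

/-- The K-transform on finite configurations: `(KG)(γ) = Σ_{η ⊆ γ} G(η)`. -/
def Ktr {α : Type*} [DecidableEq α] (G : Finset α → ℝ) (γ : Finset α) : ℝ :=
  ∑ η ∈ γ.powerset, G η

/-!
Choosing a subset of a disjoint union `s ∪ t` amounts to choosing `η ⊆ s` and `ξ ⊆ t`
independently, so `KG` at `s ∪ t` is an iterated K-transform. Applying this to `γ = (γ \ A) ∪ A`
and to `(γ \ A) ∪ B` and subtracting gives the jump difference for any number of particles.
For pairs, the terms `G(η)` coming from `ξ = ∅` cancel.
-/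

section KTransform

variable {α : Type*} [DecidableEq α]

theorem ktr_insert (G : Finset α → ℝ) {a : α} {s : Finset α} (ha : a ∉ s) :
    Ktr G (insert a s) = Ktr G s + Ktr (fun η => G (insert a η)) s :=
  Finset.sum_powerset_insert ha G

theorem ktr_sub (F G : Finset α → ℝ) (s : Finset α) :
    Ktr (fun η => F η - G η) s = Ktr F s - Ktr G s :=
  Finset.sum_sub_distrib F G

theorem ktr_empty (G : Finset α → ℝ) : Ktr G ∅ = G ∅ := by
  simp [Ktr]

theorem ktr_singleton (G : Finset α → ℝ) (a : α) : Ktr G {a} = G ∅ + G {a} := by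
  rw [← insert_empty_eq a, ktr_insert G (Finset.notMem_empty a), ktr_empty, ktr_empty]

theorem ktr_pair (G : Finset α → ℝ) {a b : α} (hab : a ≠ b) :
    Ktr G {a, b} = G ∅ + G {a} + G {b} + G {a, b} := by
  rw [ktr_insert G (Finset.notMem_singleton.mpr hab), ktr_singleton, ktr_singleton,
    insert_empty_eq]
  ring

theorem ktr_union_of_disjoint (G : Finset α → ℝ) {s t : Finset α} (hst : Disjoint s t) :
    Ktr G (s ∪ t) = Ktr (fun η => Ktr (fun ξ => G (η ∪ ξ)) t) s := by
  induction s using Finset.induction_on generalizing G with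
  | empty => simp only [Finset.empty_union, ktr_empty]
  | insert a s has ih =>
    obtain ⟨hat, hst⟩ := Finset.disjoint_insert_left.mp hst
    have ha : a ∉ s ∪ t := Finset.notMem_union.mpr ⟨has, hat⟩
    rw [Finset.insert_union, ktr_insert G ha, ktr_insert _ has, ih G hst, ih _ hst]
    simp only [Finset.insert_union]

theorem statement17_general (G : Finset α → ℝ) {γ A B : Finset α}
    (hA : A ⊆ γ) (hB : Disjoint (γ \ A) B) :
    Ktr G ((γ \ A) ∪ B) - Ktr G γ =
      Ktr (fun η => Ktr (fun ξ => G (η ∪ ξ)) B - Ktr (fun ξ => G (η ∪ ξ)) A) (γ \ A) := by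
  have ktr_γ : Ktr G γ = Ktr (fun η => Ktr (fun ξ => G (η ∪ ξ)) A) (γ \ A) := by
    rw [← ktr_union_of_disjoint G Finset.sdiff_disjoint, Finset.sdiff_union_of_subset hA]
  rw [ktr_γ, ktr_union_of_disjoint G hB, ktr_sub]

end KTransform

/-- For distinct `x₁, x₂ ∈ γ` and distinct `y₁, y₂ ∉ γ`,
`(KG)((γ∖{x₁,x₂}) ∪ {y₁,y₂}) − (KG)(γ) = (KD)(γ∖{x₁,x₂})`, where
`D(η) = G(η∪{y₁}) + G(η∪{y₂}) + G(η∪{y₁,y₂}) − G(η∪{x₁}) − G(η∪{x₂}) − G(η∪{x₁,x₂})`. -/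
theorem statement17 {α : Type*} [DecidableEq α]
    (G : Finset α → ℝ) (γ : Finset α)
    (x₁ x₂ : α) (hx₁ : x₁ ∈ γ) (hx₂ : x₂ ∈ γ) (hx : x₁ ≠ x₂)
    (y₁ y₂ : α) (hy₁ : y₁ ∉ γ) (hy₂ : y₂ ∉ γ) (hy : y₁ ≠ y₂) :
    Ktr G ((γ \ {x₁, x₂}) ∪ {y₁, y₂}) - Ktr G γ =
      Ktr (fun η => G (η ∪ {y₁}) + G (η ∪ {y₂}) + G (η ∪ {y₁, y₂}) -
        G (η ∪ {x₁}) - G (η ∪ {x₂}) - G (η ∪ {x₁, x₂})) (γ \ {x₁, x₂}) := by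
  have hxγ : {x₁, x₂} ⊆ γ := by simp [Finset.insert_subset_iff, hx₁, hx₂]
  have hyγ : Disjoint (γ \ {x₁, x₂}) {y₁, y₂} := by simp [hy₁, hy₂]
  rw [statement17_general G hxγ hyγ]
  congr 1 with η
  rw [ktr_pair _ hx, ktr_pair _ hy]
  ring
end
end
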